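/- Transport relation for the Hoffman-duality connected sum: for all nonempty indices k, l and every positive integer N, one has Z^HD_N(k_→; l) = Z^HD_N(k; ↑l). -/

import Mathlib

open scoped Classical

noncomputable section

/-- Last value of a tuple, with default `d` for the empty tuple. -/
def lastD {c : ℕ} (d : ℕ) (f : Fin c → ℕ) : ℕ :=
  if h : 0 < c then f ⟨c - 1, Nat.sub_lt h Nat.one_pos⟩ else d

/-- First value of a tuple, with default `d` for the empty tuple. -/
def headD {c : ℕ} (d : ℕ) (f : Fin c → ℕ) : ℕ :=
  if h : 0 < c then f ⟨0, h⟩ else d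

/-- The Hoffman-duality connected sum `Z^HD_N(k; l)`: the sum of
`(-1)^(nₐ-1) · binom(m₁, nₐ) · (∏_{i<a} nᵢ^(-kᵢ)) · nₐ^(-(kₐ-1)) · ∏_j m_j^(-l_j)`
over `1 ≤ n₁ ≤ ⋯ ≤ nₐ ≤ m₁ ≤ ⋯ ≤ m_b ≤ N` (with `m₁ := N` when `b = 0`). -/
def ZHD (N : ℕ) (k l : List ℕ) : ℚ :=
  ∑ p ∈ Finset.univ.filter
      (fun p : (Fin k.length → Fin (N + 1)) × (Fin l.length → Fin (N + 1)) =>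
        (∀ i, 1 ≤ (p.1 i : ℕ)) ∧ Monotone p.1 ∧ Monotone p.2 ∧
          lastD 0 (fun i => (p.1 i : ℕ)) ≤ headD N (fun j => (p.2 j : ℕ))),
    (-1 : ℚ) ^ (lastD 0 (fun i => (p.1 i : ℕ)) - 1) *
      (Nat.choose (headD N fun j => (p.2 j : ℕ)) (lastD 0 fun i => (p.1 i : ℕ)) : ℚ) *
      (∏ i, (((p.1 i : ℕ) : ℚ) ^
          (if i.1 = k.length - 1 then k.get i - 1 else k.get i))⁻¹) *
      ∏ j, (((p.2 j : ℕ) : ℚ) ^ l.get j)⁻¹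

/-- `k_↑`: increase the last entry of an index by `1` (`∅_↑ = ∅`). -/
def upLast : List ℕ → List ℕ
  | [] => []
  | k => k.dropLast ++ [k.getLast! + 1]


/-- `↑k`: increase the first entry of an index by `1` (`↑∅ = ∅`). -/
def upFirst : List ℕ → List ℕ
  | [] => []
  | a :: k => (a + 1) :: k

/-- Function-indexed version of `ZHD`. -/
def ZGaux (N : ℕ) {a b : ℕ} (k : Fin a → ℕ) (l : Fin b → ℕ) : ℚ :=
  ∑ p ∈ Finset.univ.filter
      (fun p : (Fin a → Fin (N + 1)) × (Fin b → Fin (N + 1)) =>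
        (∀ i, 1 ≤ (p.1 i : ℕ)) ∧ Monotone p.1 ∧ Monotone p.2 ∧
          lastD 0 (fun i => (p.1 i : ℕ)) ≤ headD N (fun j => (p.2 j : ℕ))),
    (-1 : ℚ) ^ (lastD 0 (fun i => (p.1 i : ℕ)) - 1) *
      (Nat.choose (headD N fun j => (p.2 j : ℕ)) (lastD 0 fun i => (p.1 i : ℕ)) : ℚ) *
      (∏ i, (((p.1 i : ℕ) : ℚ) ^
          (if i.1 = a - 1 then k i - 1 else k i))⁻¹) *
      ∏ j, (((p.2 j : ℕ) : ℚ) ^ l j)⁻¹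

theorem ZHD_eq_ZGaux (N : ℕ) (k l : List ℕ) : ZHD N k l = ZGaux N k.get l.get := rfl

theorem ZGaux_cast (N : ℕ) {a a' b : ℕ} (h : a = a') (k : Fin a → ℕ) (k' : Fin a' → ℕ)
    (l : Fin b → ℕ) (hk : ∀ i : Fin a, k i = k' (Fin.cast h i)) :
    ZGaux N k l = ZGaux N k' l := by
  subst h
  have : k = k' := funext fun i => by simpa using hk i
  rw [this]

theorem tele_sum (n m : ℕ) (h : n ≤ m) :
    ∑ x ∈ Finset.Ico n (m + 1), (-1 : ℚ) ^ x * (Nat.choose (m + 1) (x + 1) : ℚ)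
      = (-1) ^ n * (Nat.choose m n : ℚ) := by
  have := Finset.sum_Ico_sub (fun y => -((-1 : ℚ) ^ y * (Nat.choose m y : ℚ)))
    (show n ≤ m + 1 by omega)
  simp only [Nat.choose_succ_self] at this
  rw [show (-1 : ℚ) ^ n * (Nat.choose m n : ℚ) =
    -((-1 : ℚ) ^ (m + 1) * ((0 : ℕ) : ℚ)) - -((-1) ^ n * (Nat.choose m n : ℚ)) by simp, ← this]
  refine Finset.sum_congr rfl fun x _ => ?_
  rw [Nat.choose_succ_succ]
  push_cast
  ring

theorem inner_sum_aux (N n m : ℕ) (hn : 1 ≤ n) (hm : m ≤ N) :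
    ∑ x : Fin (N + 1), (if n ≤ (x : ℕ) ∧ (x : ℕ) ≤ m then
        (-1 : ℚ) ^ ((x : ℕ) - 1) * (Nat.choose m x : ℚ) else 0)
      = if n ≤ m then (-1 : ℚ) ^ (n - 1) * (Nat.choose m n : ℚ) * n * (m : ℚ)⁻¹ else 0 := by
  rw [Fin.sum_univ_eq_sum_range (fun x => if n ≤ x ∧ x ≤ m then
        (-1 : ℚ) ^ (x - 1) * (Nat.choose m x : ℚ) else 0) (N + 1), ← Finset.sum_filter]
  have hf : (Finset.range (N + 1)).filter (fun x => n ≤ x ∧ x ≤ m) = Finset.Ico n (m + 1) := by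
    ext x
    simp only [Finset.mem_filter, Finset.mem_range, Finset.mem_Ico]
    omega
  rw [hf]
  split_ifs with h
  · obtain ⟨n, rfl⟩ : ∃ n', n = n' + 1 := ⟨n - 1, by omega⟩
    obtain ⟨m, rfl⟩ : ∃ m', m = m' + 1 := ⟨m - 1, by omega⟩
    rw [← Finset.sum_Ico_add' _ n (m + 1) 1]
    simp only [Nat.add_sub_cancel]
    rw [tele_sum n m (by omega)]
    have h2 : ((m + 1 : ℕ) : ℚ) * (Nat.choose m n : ℚ)
        = (Nat.choose (m + 1) (n + 1) : ℚ) * ((n + 1 : ℕ) : ℚ) := by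
      exact_mod_cast Nat.add_one_mul_choose_eq m n
    have h3 : ((m + 1 : ℕ) : ℚ) ≠ 0 := by positivity
    rw [mul_assoc _ _ ((n + 1 : ℕ) : ℚ), ← h2]
    field_simp
  · rw [Finset.Ico_eq_empty (by omega), Finset.sum_empty]

theorem monotone_snoc {c M : ℕ} (n : Fin (c + 1) → Fin M) (x : Fin M) :
    Monotone (Fin.snoc (α := fun _ => Fin M) n x : Fin (c + 1 + 1) → Fin M) ↔
      Monotone n ∧ n (Fin.last c) ≤ x := by
  rw [Fin.monotone_iff_le_succ, Fin.monotone_iff_le_succ, Fin.forall_fin_succ']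
  simp only [Fin.succ_castSucc, Fin.snoc_castSucc, Fin.succ_last, Fin.snoc_last]

theorem lastD_succ {c : ℕ} (d : ℕ) (f : Fin (c + 1) → ℕ) : lastD d f = f (Fin.last c) := by
  simp [lastD, Fin.last]

theorem headD_succ {c : ℕ} (d : ℕ) (f : Fin (c + 1) → ℕ) : headD d f = f 0 := by
  simp [headD]

theorem ZGaux_transport (N : ℕ) {c b : ℕ} (k : Fin (c + 1) → ℕ) (l l' : Fin (b + 1) → ℕ)
    (hk : ∀ i, 1 ≤ k i) (h0 : l' 0 = l 0 + 1) (hs : ∀ j : Fin b, l' j.succ = l j.succ) :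
    ZGaux N (Fin.snoc (α := fun _ => ℕ) k 1 : Fin (c + 1 + 1) → ℕ) l = ZGaux N k l' := by
  unfold ZGaux
  simp only [lastD_succ, headD_succ]
  rw [Finset.sum_filter, Finset.sum_filter]
  rw [Fintype.sum_prod_type, Fintype.sum_prod_type]
  rw [← (Fin.snocEquiv (fun _ : Fin (c + 1 + 1) => Fin (N + 1))).sum_comp,
    Fintype.sum_prod_type, Finset.sum_comm]
  refine Finset.sum_congr rfl fun n _ => ?_
  rw [Finset.sum_comm]
  refine Finset.sum_congr rfl fun m _ => ?_
  simp only [Fin.snocEquiv, Equiv.coe_fn_mk, monotone_snoc, Fin.snoc_last]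
  by_cases hP : (∀ i, 1 ≤ (n i : ℕ)) ∧ Monotone n ∧ Monotone m
  · obtain ⟨h1, h2, h3⟩ := hP
    have key := inner_sum_aux N (n (Fin.last c)) (m 0) (h1 _) (by have := (m 0).2; omega)
    have hn0 : ((n (Fin.last c) : ℕ) : ℚ) ≠ 0 := by
      have := h1 (Fin.last c)
      exact_mod_cast (by omega : (n (Fin.last c) : ℕ) ≠ 0)
    have hA : (∏ i : Fin (c + 1), (((n i : ℕ) : ℚ) ^
          (if i.1 = c + 1 - 1 then k i - 1 else k i))⁻¹) =
        (∏ i : Fin (c + 1), (((n i : ℕ) : ℚ) ^ k i)⁻¹) * (n (Fin.last c) : ℕ) := by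
      rw [Fin.prod_univ_castSucc, Fin.prod_univ_castSucc, mul_assoc]
      congr 1
      · refine Finset.prod_congr rfl fun i _ => ?_
        rw [if_neg]
        have := i.2
        simp
        omega
      · obtain ⟨t, ht⟩ : ∃ t, k (Fin.last c) = t + 1 := ⟨k (Fin.last c) - 1, by
          have := hk (Fin.last c); omega⟩
        simp only [Fin.val_last, Nat.add_sub_cancel, if_true, ht]
        rw [pow_succ]
        field_simp
    have hB : (∏ j, (((m j : ℕ) : ℚ) ^ l' j)⁻¹) =
        (∏ j, (((m j : ℕ) : ℚ) ^ l j)⁻¹) * ((m 0 : ℕ) : ℚ)⁻¹ := by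
      rw [Fin.prod_univ_succ, Fin.prod_univ_succ]
      simp only [h0, hs, pow_succ, mul_inv]
      ring
    rw [hA, hB]
    trans (∑ x : Fin (N + 1), (if (n (Fin.last c) : ℕ) ≤ (x : ℕ) ∧ (x : ℕ) ≤ (m 0 : ℕ) then
        (-1 : ℚ) ^ ((x : ℕ) - 1) * (Nat.choose (m 0) x : ℚ) else 0)) *
        ((∏ i : Fin (c + 1), (((n i : ℕ) : ℚ) ^ k i)⁻¹) * (∏ j, (((m j : ℕ) : ℚ) ^ l j)⁻¹))
    · rw [Finset.sum_mul]
      refine Finset.sum_congr rfl fun x _ => ?_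
      by_cases hx : (n (Fin.last c) : ℕ) ≤ (x : ℕ) ∧ (x : ℕ) ≤ (m 0 : ℕ)
      · rw [if_pos hx, if_pos]
        · rw [Fin.prod_univ_castSucc]
          simp only [Fin.snoc_castSucc, Fin.snoc_last, Fin.val_last, Fin.val_castSucc,
            Nat.add_sub_cancel, if_true, Nat.sub_self, pow_zero, inv_one, mul_one]
          have : ∀ i : Fin (c + 1), ¬ (i.1 = c + 1) := fun i => by have := i.2; omega
          simp only [this, if_false]
          ring
        · refine ⟨?_, ⟨h2, Fin.le_def.2 hx.1⟩, h3, hx.2⟩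
          rw [Fin.forall_fin_succ']
          simp only [Fin.snoc_castSucc, Fin.snoc_last]
          exact ⟨h1, (h1 _).trans hx.1⟩
      · rw [if_neg hx, if_neg, zero_mul]
        rintro ⟨_, ⟨_, h5⟩, _, h6⟩
        exact hx ⟨Fin.le_def.1 h5, h6⟩
    · rw [key]
      by_cases hx : (n (Fin.last c) : ℕ) ≤ (m 0 : ℕ)
      · rw [if_pos hx, if_pos ⟨h1, h2, h3, hx⟩]
        ring
      · rw [if_neg hx, if_neg (fun h => hx h.2.2.2), zero_mul]
  · rw [if_neg (fun h => hP ⟨h.1, h.2.1, h.2.2.1⟩)]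
    refine Finset.sum_eq_zero fun x _ => ?_
    rw [if_neg]
    rintro ⟨h1, ⟨h2, _⟩, h3, _⟩
    refine hP ⟨fun i => ?_, h2, h3⟩
    have := h1 i.castSucc
    simpa only [Fin.snoc_castSucc] using this

/-- **Transport relation for the Hoffman-duality connected sum:**
`Z^HD_N(k_→; l) = Z^HD_N(k; ↑l)` for all nonempty indices `k`, `l` and every `N ≥ 1`;
here `k_→ = k ++ [1]`. -/
theorem ZHD_transport_arrow (N : ℕ) (hN : 0 < N) (k l : List ℕ)
    (hk : k ≠ []) (hk1 : ∀ i ∈ k, 1 ≤ i)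
    (hl : l ≠ []) (hl1 : ∀ i ∈ l, 1 ≤ i) :
    ZHD N (k ++ [1]) l = ZHD N k (upFirst l) := by
  obtain ⟨y, l, rfl⟩ := List.exists_cons_of_ne_nil hl
  obtain ⟨z, k, rfl⟩ := List.exists_cons_of_ne_nil hk
  rw [ZHD_eq_ZGaux, ZHD_eq_ZGaux]
  rw [ZGaux_cast N (a' := k.length + 1 + 1) (by simp) _
    (Fin.snoc (α := fun _ => ℕ) (z :: k).get 1 : Fin (k.length + 1 + 1) → ℕ)]
  · exact ZGaux_transport N (c := k.length) (b := l.length) (z :: k).get (y :: l).get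
      (upFirst (y :: l)).get (fun i => hk1 _ (List.get_mem _ _)) rfl (fun j => rfl)
  · intro i
    have hi := i.2
    simp only [List.length_append, List.length_cons, List.length_nil] at hi
    by_cases h : i.1 < k.length + 1
    · have h2 := List.getElem_append_left (as := z :: k) (bs := [1]) (i := i.1) (h' := i.2) h
      simpa [Fin.snoc, h] using h2
    · have : i.1 = k.length + 1 := by omega
      simp [Fin.snoc, this]
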